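/- Let x be a real number, α a nonzero real number, λ > 0, and n ≥ 0 an integer. Then the two-parameter Euler polynomial E_n(x; α, λ) satisfies E_n(x; α, λ) = 2 Σ_{k=0}^{n} (−α)^{n−k} C(n, k) [ Σ_{m=1}^{n−k+1} (−1)^{m−1} (m−1)! S(n−k+1, m) (1/(λ+1))^m ] x^k. Equivalently, the n-th derivative at z = 0 of z ↦ 2 e^{x z}/(λ e^{α z} + 1) equals the right-hand side. -/

import Mathlib

open Real Finset

/-- Stirling numbers of the second kind, real-valued, via the explicit formula
`S(k,m) = (1/m!) ∑_{ℓ=1}^m (-1)^(m-ℓ) C(m,ℓ) ℓ^k`; this gives `0` when `m > k`. -/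
noncomputable def S2 (k m : ℕ) : ℝ :=
  (1 / (Nat.factorial m : ℝ)) *
    ∑ ℓ ∈ Finset.Icc 1 m, (-1 : ℝ) ^ (m - ℓ) * (Nat.choose m ℓ : ℝ) * (ℓ : ℝ) ^ k

/-!
The function `u z = 1 / (l * exp (a * z) + 1)` solves the logistic equation `u' = -a * (u - u ^ 2)`.
For any solution of an autonomous equation `u' = q(u)`, the `j`-th derivative of `u` is obtained by
substituting `u` into the polynomial `(q * d/dX)^j X`. For `q = c * (X - X ^ 2)` the coefficients of
this polynomial obey, up to `c ^ j` and signed factorials, the recurrence of the Stirling numbers of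
the second kind, and the explicit formula for those numbers is the `m`-th forward difference of
`x ^ k` at `0`, divided by `m!`. The Leibniz rule for `exp (x * z) * u z` then gives the Euler
polynomials.
-/

open Polynomial fwdDiff Filter Topology
open scoped Nat

section Stirling

variable {R : Type*} [CommRing R]

theorem fwdDiff_iter_succ_pow_succ_zero (n m : ℕ) :
    Δ_[1] ^[m + 1] (fun x : R ↦ x ^ (n + 1)) 0 = (m + 1) * Δ_[1] ^[m] (fun x : R ↦ x ^ n) 1 := by
  rw [fwdDiff_iter_eq_sum_shift, fwdDiff_iter_eq_sum_shift, sum_range_succ', mul_sum]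
  simp only [zero_smul, add_zero, zero_pow n.succ_ne_zero, smul_zero]
  refine sum_congr rfl fun i _ ↦ ?_
  have absorption : ((m : R) + 1) * m.choose i = (m + 1).choose (i + 1) * (i + 1) :=
    mod_cast congrArg (Nat.cast (R := R)) (Nat.add_one_mul_choose_eq m i)
  simp only [Nat.add_sub_add_right, zsmul_eq_mul, nsmul_eq_mul, mul_one, zero_add]
  push_cast
  linear_combination (-(-1) ^ (m - i) * (1 + (i : R)) ^ n) * absorption

theorem fwdDiff_iter_pow_zero_eq_factorial_mul_stirlingSecond (n m : ℕ) :
    Δ_[1] ^[m] (fun x : R ↦ x ^ n) 0 = m ! * Nat.stirlingSecond n m := by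
  induction n generalizing m with
  | zero =>
    cases m with
    | zero => simp
    | succ m => simpa using congrFun (fwdDiff_iter_pow_eq_zero_of_lt (R := R) m.succ_pos) 0
  | succ n ih =>
    cases m with
    | zero => simp
    | succ m =>
      have shift : Δ_[1] ^[m] (fun x : R ↦ x ^ n) 1 =
          Δ_[1] ^[m + 1] (fun x : R ↦ x ^ n) 0 + Δ_[1] ^[m] (fun x : R ↦ x ^ n) 0 := by
        rw [Function.iterate_succ_apply', fwdDiff, zero_add, sub_add_cancel]
      rw [fwdDiff_iter_succ_pow_succ_zero, shift, ih, ih, Nat.stirlingSecond_succ_succ,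
        Nat.factorial_succ]
      push_cast
      ring

end Stirling

theorem S2_eq_stirlingSecond {k : ℕ} (hk : k ≠ 0) (m : ℕ) : S2 k m = Nat.stirlingSecond k m := by
  have h := fwdDiff_iter_pow_zero_eq_factorial_mul_stirlingSecond (R := ℝ) k m
  rw [fwdDiff_iter_eq_sum_shift, range_eq_Ico,
    sum_eq_sum_Ico_succ_bot (Nat.add_one_pos m), Ico_add_one_right_eq_Icc] at h
  simp only [zero_smul, add_zero, zero_pow hk, smul_zero, zero_add, zsmul_eq_mul, nsmul_eq_mul,
    mul_one, Int.cast_mul, Int.cast_pow, Int.cast_neg, Int.cast_one, Int.cast_natCast] at h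
  rw [S2, h, one_div, inv_mul_cancel_left₀ (by positivity)]

theorem sum_range_stirlingSecond_succ_nsmul {A : Type*} [AddCommMonoid A] (f : ℕ → A) (n : ℕ) :
    ∑ m ∈ range (n + 2), Nat.stirlingSecond (n + 2) (m + 1) • f m =
      ∑ m ∈ range (n + 1),
        Nat.stirlingSecond (n + 1) (m + 1) • ((m + 1) • f m + f (m + 1)) := by
  have stirlingSecond_top : Nat.stirlingSecond (n + 1) (n + 2) = 0 :=
    Nat.stirlingSecond_eq_zero_of_lt (Nat.lt_succ_self _)
  simp only [Nat.stirlingSecond_succ_succ (n + 1), add_smul _ (Nat.stirlingSecond _ _), smul_add,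
    sum_add_distrib, mul_smul, smul_comm (_ + 1) (Nat.stirlingSecond _ _)]
  congr 1
  · rw [sum_range_succ, stirlingSecond_top, zero_smul, add_zero]
  · rw [sum_range_succ', Nat.stirlingSecond_succ_zero, zero_smul, add_zero]

section LogisticPolynomial

variable {R : Type*} [CommRing R]

theorem X_sub_X_sq_mul_derivative_factorial_mul_X_pow (m : ℕ) :
    (X - X ^ 2) * derivative ((-1) ^ m * (m ! : R[X]) * X ^ (m + 1)) =
      (m + 1) • ((-1) ^ m * (m ! : R[X]) * X ^ (m + 1)) +
        (-1) ^ (m + 1) * ((m + 1)! : R[X]) * X ^ (m + 2) := by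
  have derivative_coeff : derivative ((-1) ^ m * (m ! : R[X])) = 0 := by
    exact_mod_cast derivative_intCast (R := R) (n := (-1) ^ m * (m ! : ℤ))
  rw [derivative_mul, derivative_coeff, derivative_X_pow_succ, Nat.factorial_succ, nsmul_eq_mul]
  simp only [map_add, map_natCast, map_one]
  push_cast
  ring

theorem iterate_logistic_mul_derivative_X (c : R) (j : ℕ) :
    (fun p ↦ C c * (X - X ^ 2) * derivative p)^[j] X =
      C c ^ j * ∑ m ∈ range (j + 1),
        Nat.stirlingSecond (j + 1) (m + 1) • ((-1) ^ m * (m ! : R[X]) * X ^ (m + 1)) := by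
  induction j with
  | zero => simp [Nat.stirlingSecond_self]
  | succ j ih =>
    rw [Function.iterate_succ_apply', ih, sum_range_stirlingSecond_succ_nsmul, ← C_pow,
      derivative_C_mul, C_pow, mul_mul_mul_comm, ← pow_succ', derivative_sum, mul_sum]
    simp only [derivative_smul, mul_smul_comm, X_sub_X_sq_mul_derivative_factorial_mul_X_pow]

end LogisticPolynomial

theorem iteratedDeriv_eventuallyEq_of_hasDerivAt_eval {𝕜 : Type*} [NontriviallyNormedField 𝕜]
    {u : 𝕜 → 𝕜} {z₀ : 𝕜} (q : 𝕜[X]) (hu : ∀ᶠ z in 𝓝 z₀, HasDerivAt u (q.eval (u z)) z) (j : ℕ) :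
    iteratedDeriv j u =ᶠ[𝓝 z₀] fun z ↦ ((fun p ↦ q * derivative p)^[j] X).eval (u z) := by
  induction j with
  | zero => simp
  | succ j ih =>
    rw [iteratedDeriv_succ]
    filter_upwards [ih.deriv, hu] with z hz huz
    rw [hz, Function.iterate_succ_apply', eval_mul, mul_comm]
    exact ((Polynomial.hasDerivAt _ _).comp z huz).deriv

theorem hasDerivAt_one_div_mul_exp_add_one {a l z : ℝ} (h : l * exp (a * z) + 1 ≠ 0) :
    HasDerivAt (fun z ↦ 1 / (l * exp (a * z) + 1))
      (-a * (1 / (l * exp (a * z) + 1) - (1 / (l * exp (a * z) + 1)) ^ 2)) z := by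
  have denominator : HasDerivAt (fun z ↦ l * exp (a * z) + 1) (l * (exp (a * z) * a)) z :=
    (((hasDerivAt_const_mul a).exp).const_mul l).add_const 1
  simp only [one_div]
  refine (denominator.fun_inv h).congr_deriv ?_
  field_simp
  ring

theorem iteratedDeriv_one_div_mul_exp_add_one {a l z : ℝ} (h : l * exp (a * z) + 1 ≠ 0) (j : ℕ) :
    iteratedDeriv j (fun z ↦ 1 / (l * exp (a * z) + 1)) z =
      (-a) ^ j * ∑ m ∈ Icc 1 (j + 1),
        (-1) ^ (m - 1) * ((m - 1)! : ℝ) * S2 (j + 1) m * (1 / (l * exp (a * z) + 1)) ^ m := by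
  have logistic : ∀ᶠ w in 𝓝 z, HasDerivAt (fun z ↦ 1 / (l * exp (a * z) + 1))
      ((C (-a) * (X - X ^ 2)).eval (1 / (l * exp (a * w) + 1))) w :=
    ((by fun_prop : Continuous fun w ↦ l * exp (a * w) + 1).continuousAt.eventually_ne h).mono
      fun w hw ↦ by simpa using hasDerivAt_one_div_mul_exp_add_one hw
  rw [(iteratedDeriv_eventuallyEq_of_hasDerivAt_eval _ logistic j).eq_of_nhds,
    iterate_logistic_mul_derivative_X, ← Ico_add_one_right_eq_Icc, sum_Ico_eq_sum_range]
  simp only [eval_mul, eval_pow, eval_C, eval_finsetSum]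
  congr 1
  refine sum_congr rfl fun m _ ↦ ?_
  rw [add_comm 1 m, Nat.add_sub_cancel, S2_eq_stirlingSecond j.succ_ne_zero]
  simp only [nsmul_eq_mul, eval_mul, eval_pow, eval_neg, eval_one, eval_natCast, eval_X]
  ring

theorem stmt_16_general (x : ℝ) {a l z : ℝ} (h : l * exp (a * z) + 1 ≠ 0) (n : ℕ) :
    iteratedDeriv n (fun z ↦ 2 * exp (x * z) / (l * exp (a * z) + 1)) z =
      2 * ∑ k ∈ range (n + 1),
        (-a) ^ (n - k) * (n.choose k : ℝ) *
          (∑ m ∈ Icc 1 (n - k + 1),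
            (-1) ^ (m - 1) * ((m - 1)! : ℝ) * S2 (n - k + 1) m *
              (1 / (l * exp (a * z) + 1)) ^ m) *
          (x ^ k * exp (x * z)) := by
  have exp_smooth : ContDiffAt ℝ n (fun z ↦ exp (x * z)) z := by fun_prop
  have logistic_smooth : ContDiffAt ℝ n (fun z ↦ 1 / (l * exp (a * z) + 1)) z :=
    contDiffAt_const.div (by fun_prop) h
  have factor : (fun z ↦ 2 * exp (x * z) / (l * exp (a * z) + 1)) =
      fun z ↦ 2 * (exp (x * z) * (1 / (l * exp (a * z) + 1))) := by
    funext z; ring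
  rw [factor, iteratedDeriv_const_mul_field, iteratedDeriv_fun_mul exp_smooth logistic_smooth]
  congr 1
  refine sum_congr rfl fun k _ ↦ ?_
  rw [iteratedDeriv_exp_const_mul, iteratedDeriv_one_div_mul_exp_add_one h]
  ring

theorem stmt_16 (x a l : ℝ) (ha : a ≠ 0) (hl : 0 < l) (n : ℕ) :
    iteratedDeriv n (fun z : ℝ => 2 * Real.exp (x * z) / (l * Real.exp (a * z) + 1)) 0 =
      2 * ∑ k ∈ Finset.range (n + 1),
        (-a) ^ (n - k) * (Nat.choose n k : ℝ) *
          (∑ m ∈ Finset.Icc 1 (n - k + 1),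
            (-1 : ℝ) ^ (m - 1) * (Nat.factorial (m - 1) : ℝ) * S2 (n - k + 1) m *
              (1 / (l + 1)) ^ m) *
          x ^ k := by
  simpa using stmt_16_general x (a := a) (l := l) (z := 0) (by positivity) n
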